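/- (Implicit Function Theorem in a Denjoy-Carleman class) Let M = (M_0, M_1, M_2, …) be an increasing sequence of positive real numbers with M_0 = 1 that is logarithmically convex, satisfies lim_{j→∞} (M_j)^{1/j} = ∞, and satisfies sup_{j≥1} (M_{j+1}/M_j)^{1/j} < ∞. Let U be an open subset of ℝ^N × ℝ^P with product coordinates (x, y). Let f_1, …, f_P ∈ C^ℝ_M(U), let (a, b) ∈ U with f(a, b) = (f_1(a,b), …, f_P(a,b)) = 0, and suppose the matrix (∂f_i/∂y_j)(a, b) is invertible. Then there exists a product neighborhood V × W of (a, b) in U and a mapping g = (g_1, …, g_P) : V → W such that g_i ∈ C^ℝ_M(V) for all 1 ≤ i ≤ P, g(a) = b, and f(x, g(x)) = 0 for all x ∈ V. -/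

import Mathlib

/-- The `i`-th partial derivative of a function on Euclidean space. -/
noncomputable def pd {ι : Type} [Fintype ι] [DecidableEq ι] {W : Type} [NormedAddCommGroup W]
    [NormedSpace ℝ W] (i : ι) (f : EuclideanSpace ℝ ι → W) : EuclideanSpace ℝ ι → W :=
  fun x => fderiv ℝ f x (EuclideanSpace.single i 1)

/-- The multi-index derivative `D^α f`. -/
noncomputable def mderiv {ι : Type} [Fintype ι] [DecidableEq ι] {W : Type} [NormedAddCommGroup W]
    [NormedSpace ℝ W] (α : ι → ℕ) (f : EuclideanSpace ℝ ι → W) : EuclideanSpace ℝ ι → W :=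
  (Finset.univ : Finset ι).toList.foldr (fun i g => (pd i)^[α i] g) f

/-- Membership in the real Denjoy-Carleman class `C^ℝ_M(U)`: `f` is `C^∞` on `U` and on every
compact `K ⊆ U` there are `A, B > 0` with `|(1/α!) D^α f(x)| ≤ A B^{|α|} M_{|α|}`. -/
def CRM {ι : Type} [Fintype ι] [DecidableEq ι] (M : ℕ → ℝ)
    (U : Set (EuclideanSpace ℝ ι)) (f : EuclideanSpace ℝ ι → ℝ) : Prop :=
  ContDiffOn ℝ (⊤ : ℕ∞) f U ∧
  ∀ K : Set (EuclideanSpace ℝ ι), K ⊆ U → IsCompact K →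
    ∃ A B : ℝ, 0 < A ∧ 0 < B ∧ ∀ x ∈ K, ∀ α : ι → ℕ,
      (1 / (∏ i, ((α i).factorial : ℝ))) * |mderiv α f x| ≤
        A * B ^ (∑ i, α i) * M (∑ i, α i)

/-- The point of `ℝ^N × ℝ^P` (as `EuclideanSpace ℝ (Fin N ⊕ Fin P)`) with coordinates `(x, y)`. -/
noncomputable def pairE {N P : ℕ} (x : EuclideanSpace ℝ (Fin N)) (y : EuclideanSpace ℝ (Fin P)) :
    EuclideanSpace ℝ (Fin N ⊕ Fin P) :=
  (EuclideanSpace.equiv (Fin N ⊕ Fin P) ℝ).symm (Sum.elim (fun i => x i) (fun j => y j))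

/-- The first (`ℝ^N`) component of a point of `ℝ^N × ℝ^P`. -/
noncomputable def fstE {N P : ℕ} (z : EuclideanSpace ℝ (Fin N ⊕ Fin P)) :
    EuclideanSpace ℝ (Fin N) :=
  (EuclideanSpace.equiv (Fin N) ℝ).symm (fun i => z (Sum.inl i))

/-- The second (`ℝ^P`) component of a point of `ℝ^N × ℝ^P`. -/
noncomputable def sndE {N P : ℕ} (z : EuclideanSpace ℝ (Fin N ⊕ Fin P)) :
    EuclideanSpace ℝ (Fin P) :=
  (EuclideanSpace.equiv (Fin P) ℝ).symm (fun j => z (Sum.inr j))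

/-!
Measure derivatives by operator norms instead of multi-indices, which costs only factors
`card ι ^ n`. Let `g` be a local inverse of `f`. Since `id - Dg(x) ∘ f` has vanishing derivative at
`g x`, applying Faà di Bruno's formula to its composition with `g` expresses `Dⁿg(x)`, for `n ≥ 2`,
through derivatives of `g` of order less than `n`. For positive `s 1, …, s k`, log-convexity bounds
`M k * ∏ i, M (s i)` by `M 1 ^ k * M (∑ i, s i)`, so the weights factor out of the recursion. What
is left is the recursion for the derivatives at `0` of the solution of
`V = t + a (1 / (1 - b V) - 1 - b V)`. That solution is analytic, so its derivatives are at most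
`A * R ^ n * n !`, which puts `g` in the class of `f`.

The implicit function theorem is the inverse function theorem for `(x, y) ↦ (x, f (x, y))`.
-/

open Filter Set Topology
open scoped ContDiff Nat

section FaaDiBruno

lemma sum_partSize {n : ℕ} (c : OrderedFinpartition n) : ∑ i, c.partSize i = n := by
  simpa using c.sum_sigma_eq_sum (fun _ ↦ (1 : ℕ))

lemma partSize_lt_of_two_le_length {n : ℕ} (c : OrderedFinpartition n) (hc : 2 ≤ c.length)
    (i : Fin c.length) : c.partSize i < n := by
  have : Nontrivial (Fin c.length) := Fin.nontrivial_iff_two_le.mpr hc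
  obtain ⟨j, hj⟩ := exists_ne i
  have hij : c.partSize i + c.partSize j ≤ ∑ k, c.partSize k := by
    rw [← Finset.sum_pair hj.symm]
    exact Finset.sum_le_sum_of_subset (Finset.subset_univ _)
  have := c.partSize_pos j
  have := sum_partSize c
  lia

variable {𝕜 : Type*} [NontriviallyNormedField 𝕜]
  {E : Type*} [NormedAddCommGroup E] [NormedSpace 𝕜 E]
  {F : Type*} [NormedAddCommGroup F] [NormedSpace 𝕜 F]
  {G : Type*} [NormedAddCommGroup G] [NormedSpace 𝕜 G]

lemma iteratedFDeriv_clm_eq_zero (L : E →L[𝕜] F) {n : ℕ} (hn : 2 ≤ n) (x : E) :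
    iteratedFDeriv 𝕜 n L x = 0 := by
  obtain ⟨m, rfl⟩ := Nat.exists_eq_add_of_le' hn
  have hconst : fderiv 𝕜 L = fun _ ↦ L := funext fun _ ↦ L.fderiv
  rw [← norm_eq_zero, ← norm_iteratedFDeriv_fderiv, hconst,
    iteratedFDeriv_const_of_ne m.succ_ne_zero, Pi.zero_apply, norm_zero]

lemma iteratedFDeriv_comp_of_fderiv_eq_zero {h : F → G} {g : E → F} {x : E} {n : ℕ} (hn : 0 < n)
    (hh : ContDiffAt 𝕜 n h (g x)) (hg : ContDiffAt 𝕜 n g x) (h0 : fderiv 𝕜 h (g x) = 0) :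
    iteratedFDeriv 𝕜 n (h ∘ g) x = ∑ c : OrderedFinpartition n with 2 ≤ c.length,
      c.compAlongOrderedFinpartition (iteratedFDeriv 𝕜 c.length h (g x))
        fun i ↦ iteratedFDeriv 𝕜 (c.partSize i) g x := by
  rw [iteratedFDeriv_comp hh hg le_rfl, FormalMultilinearSeries.taylorComp,
    Finset.sum_filter_of_ne]
  · rfl
  intro c _ hne
  by_contra! hlt
  have hlen : c.length = 1 := le_antisymm (by lia) (c.length_pos hn)
  have hzero : iteratedFDeriv 𝕜 c.length h (g x) = 0 := by
    rw [hlen, ← norm_eq_zero, norm_iteratedFDeriv_one, h0, norm_zero]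
  exact hne (by ext; simp [hzero])

lemma norm_iteratedFDeriv_id_sub_clm_comp_le (L : E →L[𝕜] F) {f : F → E} {y : F} {n : ℕ}
    (hn : 2 ≤ n) (hf : ContDiffAt 𝕜 n f y) :
    ‖iteratedFDeriv 𝕜 n (id - L ∘ f) y‖ ≤ ‖L‖ * ‖iteratedFDeriv 𝕜 n f y‖ := by
  have hid : iteratedFDeriv 𝕜 n (id : F → F) y = 0 :=
    iteratedFDeriv_clm_eq_zero (.id 𝕜 F) hn y
  rw [iteratedFDeriv_sub_apply contDiffAt_id (L.contDiff.contDiffAt.comp y hf), hid, zero_sub,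
    norm_neg]
  exact L.norm_iteratedFDeriv_comp_left hf le_rfl

lemma fderiv_id_sub_fderiv_comp_eq_zero {f : F → E} {g : E → F} {x : E}
    (hf : DifferentiableAt 𝕜 f (g x)) (hg : DifferentiableAt 𝕜 g x)
    (hx : f (g x) = x) (hgf : g ∘ f =ᶠ[𝓝 (g x)] id) :
    fderiv 𝕜 (id - fderiv 𝕜 g x ∘ f) (g x) = 0 := by
  have hcomp : HasFDerivAt (g ∘ f) (fderiv 𝕜 g x ∘L fderiv 𝕜 f (g x)) (g x) :=
    HasFDerivAt.comp _ (by simpa only [hx] using hg.hasFDerivAt) hf.hasFDerivAt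
  have hid : fderiv 𝕜 g x ∘L fderiv 𝕜 f (g x) = .id 𝕜 F :=
    (hcomp.congr_of_eventuallyEq hgf.symm).unique (hasFDerivAt_id _)
  have hsub : HasFDerivAt (id - fderiv 𝕜 g x ∘ f)
      (.id 𝕜 F - fderiv 𝕜 g x ∘L fderiv 𝕜 f (g x)) (g x) :=
    (hasFDerivAt_id _).sub ((fderiv 𝕜 g x).hasFDerivAt.comp _ hf.hasFDerivAt)
  rw [hsub.fderiv, hid, sub_self]

lemma norm_iteratedFDeriv_inverse_le {f : F → E} {g : E → F} {x : E} {n : ℕ} (hn : 2 ≤ n)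
    (hf : ContDiffAt 𝕜 n f (g x)) (hg : ContDiffAt 𝕜 n g x)
    (hfg : f ∘ g =ᶠ[𝓝 x] id) (hgf : g ∘ f =ᶠ[𝓝 (g x)] id) :
    ‖iteratedFDeriv 𝕜 n g x‖ ≤ ∑ c : OrderedFinpartition n with 2 ≤ c.length,
      ‖fderiv 𝕜 g x‖ * ‖iteratedFDeriv 𝕜 c.length f (g x)‖ *
        ∏ i, ‖iteratedFDeriv 𝕜 (c.partSize i) g x‖ := by
  set L := fderiv 𝕜 g x
  have hn1 : (n : WithTop ℕ∞) ≠ 0 := by exact_mod_cast (by lia : n ≠ 0)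
  have hnewton : ContDiffAt 𝕜 n (id - L ∘ f) (g x) :=
    contDiffAt_id.sub (L.contDiff.contDiffAt.comp _ hf)
  have hnewton0 : fderiv 𝕜 (id - L ∘ f) (g x) = 0 :=
    fderiv_id_sub_fderiv_comp_eq_zero (hf.differentiableAt hn1) (hg.differentiableAt hn1)
      hfg.self_of_nhds hgf
  have hcomp : (id - L ∘ f) ∘ g =ᶠ[𝓝 x] g - ⇑L :=
    hfg.mono fun y (hy : f (g y) = y) ↦ by simp [hy]
  have hgn : iteratedFDeriv 𝕜 n ((id - L ∘ f) ∘ g) x = iteratedFDeriv 𝕜 n g x := by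
    rw [(hcomp.iteratedFDeriv 𝕜 n).self_of_nhds, iteratedFDeriv_sub_apply hg
      L.contDiff.contDiffAt, iteratedFDeriv_clm_eq_zero L hn, sub_zero]
  rw [← hgn, iteratedFDeriv_comp_of_fderiv_eq_zero (by lia) hnewton hg hnewton0]
  refine (norm_sum_le _ _).trans (Finset.sum_le_sum fun c hc ↦ ?_)
  refine (c.norm_compAlongOrderedFinpartition_le _ _).trans ?_
  gcongr
  exact norm_iteratedFDeriv_id_sub_clm_comp_le L (Finset.mem_filter.mp hc).2
    (hf.of_le (mod_cast c.length_le))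

end FaaDiBruno

section Weights

variable {M : ℕ → ℝ} (hpos : ∀ j, 0 < M j) (hlog : Monotone fun j ↦ M (j + 1) / M j)
include hpos hlog

lemma weight_succ_mul_le {m n : ℕ} (h : m ≤ n) : M (m + 1) * M n ≤ M m * M (n + 1) := by
  have := (div_le_div_iff₀ (hpos m) (hpos n)).mp (hlog h)
  linarith

lemma weight_succ_mul_weight_succ_le (n j : ℕ) :
    M (n + 1) * M (j + 1) ≤ M 1 * M (n + j + 1) := by
  induction n with
  | zero => simp
  | succ n ih =>
    have hstep : M (n + 2) * M (n + j + 1) ≤ M (n + 1) * M (n + j + 2) :=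
      weight_succ_mul_le hpos hlog (by lia)
    rw [show n + 1 + j + 1 = n + j + 2 by ring]
    refine le_of_mul_le_mul_right ?_ (mul_pos (hpos (n + 1)) (hpos (n + j + 1)))
    calc M (n + 2) * M (j + 1) * (M (n + 1) * M (n + j + 1))
        = (M (n + 1) * M (j + 1)) * (M (n + 2) * M (n + j + 1)) := by ring
      _ ≤ (M 1 * M (n + j + 1)) * (M (n + 1) * M (n + j + 2)) := by
        gcongr <;> exact (mul_pos (hpos _) (hpos _)).le
      _ = M 1 * M (n + j + 2) * (M (n + 1) * M (n + j + 1)) := by ring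

lemma weight_card_mul_prod_le {ι : Type*} (s : Finset ι) {p : ι → ℕ} (hp : ∀ i ∈ s, 0 < p i) :
    M s.card * ∏ i ∈ s, M (p i) ≤ M 1 ^ s.card * M (∑ i ∈ s, p i) := by
  classical
  induction s using Finset.induction_on with
  | empty => simp
  | insert i s hi ih =>
    have hp' : ∀ l ∈ s, 0 < p l := fun l hl ↦ hp l (Finset.mem_insert_of_mem hl)
    have hcard : s.card ≤ ∑ l ∈ s, p l := by
      rw [Finset.card_eq_sum_ones]
      exact Finset.sum_le_sum hp'
    obtain ⟨j, hj⟩ := Nat.exists_eq_add_of_lt (hp i (Finset.mem_insert_self i s))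
    rw [Finset.prod_insert hi, Finset.sum_insert hi, Finset.card_insert_of_notMem hi, hj]
    set k := s.card
    set n := ∑ l ∈ s, p l
    set Q := ∏ l ∈ s, M (p l)
    have hQ : 0 ≤ Q := Finset.prod_nonneg fun l _ ↦ (hpos _).le
    have hMk : 0 < M k * M n := mul_pos (hpos _) (hpos _)
    rw [show 0 + j + 1 + n = n + j + 1 by ring, show 0 + j + 1 = j + 1 by ring]
    refine le_of_mul_le_mul_right ?_ hMk
    calc M (k + 1) * (M (j + 1) * Q) * (M k * M n)
        = (M (k + 1) * M n) * (M k * Q) * M (j + 1) := by ring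
      _ ≤ (M k * M (n + 1)) * (M 1 ^ k * M n) * M (j + 1) :=
        mul_le_mul_of_nonneg_right
          (mul_le_mul (weight_succ_mul_le hpos hlog hcard) (ih hp') (mul_nonneg (hpos k).le hQ)
            (mul_pos (hpos _) (hpos _)).le) (hpos _).le
      _ = M (n + 1) * M (j + 1) * (M 1 ^ k * (M k * M n)) := by ring
      _ ≤ M 1 * M (n + j + 1) * (M 1 ^ k * (M k * M n)) :=
        mul_le_mul_of_nonneg_right (weight_succ_mul_weight_succ_le hpos hlog n j)
          (mul_pos (pow_pos (hpos 1) k) hMk).le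
      _ = M 1 ^ (k + 1) * M (n + j + 1) * (M k * M n) := by ring

end Weights

section FixedPoint

variable {𝕜 : Type*} [NontriviallyNormedField 𝕜] {K V : 𝕜 → 𝕜}

lemma exists_analyticAt_eventuallyEq_add_comp [CompleteSpace 𝕜] [CharZero 𝕜]
    (hK : AnalyticAt 𝕜 K 0) (hK0 : K 0 = 0) (hK1 : deriv K 0 = 0) :
    ∃ V : 𝕜 → 𝕜, AnalyticAt 𝕜 V 0 ∧ V 0 = 0 ∧ V =ᶠ[𝓝 0] id + K ∘ V := by
  have hH : AnalyticAt 𝕜 (id - K) 0 := analyticAt_id.sub hK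
  have hH0 : (id - K : 𝕜 → 𝕜) 0 = 0 := by simp [hK0]
  have hH1 : deriv (id - K) 0 ≠ 0 := by
    rw [deriv_sub differentiableAt_id hK.differentiableAt, hK1, deriv_id, sub_zero]
    exact one_ne_zero
  have hV := hH.analyticAt_localInverse hH1
  have hV0 := (hH.hasStrictDerivAt.hasStrictFDerivAt_equiv hH1).localInverse_apply_image
  have hHV := hH.hasStrictDerivAt.eventually_right_inverse hH1
  rw [hH0] at hV hV0 hHV
  refine ⟨_, hV, hV0, hHV.mono fun t ht ↦ ?_⟩
  exact sub_eq_iff_eq_add.mp ht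

lemma deriv_eq_one_of_eventuallyEq_add_comp (hK : HasDerivAt K 0 0)
    (hV : DifferentiableAt 𝕜 V 0) (hV0 : V 0 = 0) (hVK : V =ᶠ[𝓝 0] id + K ∘ V) :
    deriv V 0 = 1 := by
  have hKV : HasDerivAt (K ∘ V) (0 * deriv V 0) 0 :=
    HasDerivAt.comp _ (hV0.symm ▸ hK) hV.hasDerivAt
  simpa using hVK.deriv_eq.trans ((hasDerivAt_id 0).add hKV).deriv

lemma iteratedDeriv_eq_sum_of_eventuallyEq_add_comp {n : ℕ} (hn : 2 ≤ n)
    (hK : ContDiffAt 𝕜 n K 0) (hK1 : deriv K 0 = 0) (hV : ContDiffAt 𝕜 n V 0) (hV0 : V 0 = 0)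
    (hVK : V =ᶠ[𝓝 0] id + K ∘ V) :
    iteratedDeriv n V 0 = ∑ c : OrderedFinpartition n with 2 ≤ c.length,
      iteratedDeriv c.length K 0 * ∏ i, iteratedDeriv (c.partSize i) V 0 := by
  have hKV : ContDiffAt 𝕜 n K (V 0) := hV0.symm ▸ hK
  have hid : iteratedDeriv n (id : 𝕜 → 𝕜) 0 = 0 := by
    simp [iteratedDeriv_id, show n ≠ 0 by lia, show n ≠ 1 by lia]
  rw [hVK.iteratedDeriv_eq n, iteratedDeriv_add contDiffAt_id (hKV.comp _ hV), hid, zero_add,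
    iteratedDeriv_comp_eq_sum_orderedFinpartition hKV hV le_rfl, hV0,
    Finset.sum_filter_of_ne]
  intro c _ hne
  by_contra! hlt
  have hlen : c.length = 1 := le_antisymm (by lia) (c.length_pos (by lia))
  exact hne (mul_eq_zero_of_left (by rw [hlen, iteratedDeriv_one, hK1]) _)

end FixedPoint

section Majorant

lemma exists_norm_iteratedDeriv_le_of_analyticAt {E : Type*} [NormedAddCommGroup E]
    [NormedSpace ℝ E] [CompleteSpace E] {f : ℝ → E} {x : ℝ} (hf : AnalyticAt ℝ f x) :
    ∃ A R : ℝ, 0 < A ∧ 0 < R ∧ ∀ n, ‖iteratedDeriv n f x‖ ≤ A * R ^ n * n ! := by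
  obtain ⟨p, r, hp⟩ := hf
  obtain ⟨ρ, hρ0, hρr⟩ := ENNReal.lt_iff_exists_nnreal_btwn.mp hp.r_pos
  obtain ⟨A, hA, hpA⟩ := p.norm_le_div_pow_of_pos_of_lt_radius (by exact_mod_cast hρ0)
    (hρr.trans_le hp.r_le)
  refine ⟨A, (ρ : ℝ)⁻¹, hA, by simpa using hρ0, fun n ↦ ?_⟩
  calc ‖iteratedDeriv n f x‖ = n ! * ‖p n fun _ ↦ 1‖ := by
        rw [iteratedDeriv_eq_iteratedFDeriv, ← hp.factorial_smul, ← Nat.cast_smul_eq_nsmul ℝ,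
          norm_smul, Real.norm_natCast]
    _ ≤ n ! * ‖p n‖ := by
        gcongr
        simp
    _ ≤ n ! * (A / ρ ^ n) := by gcongr; exact hpA n
    _ = A * (ρ : ℝ)⁻¹ ^ n * n ! := by rw [inv_pow]; ring

lemma iteratedDeriv_const_mul_inv_sub_affine (a b : ℝ) {k : ℕ} (hk : 2 ≤ k) :
    iteratedDeriv k (fun s ↦ a * ((-b * s + 1)⁻¹ - (b * s + 1))) 0 = a * (k ! * b ^ k) := by
  have hinv : ContDiffAt ℝ k (fun s : ℝ ↦ (-b * s + 1)⁻¹) 0 :=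
    ContDiffAt.inv (by fun_prop) (by simp)
  have hlin : iteratedDeriv k (fun s ↦ b * s + 1) 0 = 0 := by
    rw [iteratedDeriv_fun_add (by fun_prop) (by fun_prop), iteratedDeriv_const_mul_field,
      iteratedDeriv_fun_id, iteratedDeriv_const]
    simp [show k ≠ 0 by lia, show k ≠ 1 by lia]
  have hgeom : iteratedDeriv k (fun s ↦ (-b * s + 1)⁻¹) 0 = k ! * b ^ k := by
    rw [iteratedDeriv_eq_iterate, iter_deriv_inv_linear]
    have hsign : (-1 : ℝ) ^ k * (-b) ^ k = b ^ k := by rw [← mul_pow, neg_mul_neg, one_mul]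
    rw [← hsign]
    simp only [mul_zero, zero_add, one_zpow, mul_one]
    ring
  rw [iteratedDeriv_const_mul_field, iteratedDeriv_fun_sub hinv (by fun_prop), hlin,
    hgeom, sub_zero]

-- `v n` is the `n`-th derivative at `0` of the solution of `V t = t + K (V t)` with
-- `K s = a (1 / (1 - b s) - 1 - b s)`, whose Taylor coefficients of order `k ≥ 2` are `a bᵏ`.
lemma exists_partition_majorant (a b : ℝ) : ∃ v : ℕ → ℝ,
    v 1 = 1 ∧
    (∀ n, 2 ≤ n → v n = ∑ c : OrderedFinpartition n with 2 ≤ c.length,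
      a * (c.length ! * b ^ c.length) * ∏ i, v (c.partSize i)) ∧
    ∃ A R : ℝ, 0 < A ∧ 0 < R ∧ ∀ n, v n ≤ A * R ^ n * n ! := by
  set K : ℝ → ℝ := fun s ↦ a * ((-b * s + 1)⁻¹ - (b * s + 1)) with hK
  have hKan : AnalyticAt ℝ K 0 := by
    rw [hK]; fun_prop (disch := simp)
  have hK1 : HasDerivAt K 0 0 := by
    have hlin (c : ℝ) : HasDerivAt (fun s ↦ c * s + 1) c 0 := by
      simpa using ((hasDerivAt_id (0 : ℝ)).const_mul c).add_const 1
    simpa [hK] using (((hlin (-b)).inv (by simp)).sub (hlin b)).const_mul a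
  obtain ⟨V, hV, hV0, hVK⟩ :=
    exists_analyticAt_eventuallyEq_add_comp hKan (by simp [hK]) hK1.deriv
  obtain ⟨A, R, hA, hR, hbound⟩ := exists_norm_iteratedDeriv_le_of_analyticAt hV
  refine ⟨fun n ↦ iteratedDeriv n V 0, ?_, fun n hn ↦ ?_, A, R, hA, hR,
    fun n ↦ (le_abs_self _).trans (hbound n)⟩
  · dsimp only
    rw [iteratedDeriv_one, deriv_eq_one_of_eventuallyEq_add_comp hK1 hV.differentiableAt hV0 hVK]
  · dsimp only
    rw [iteratedDeriv_eq_sum_of_eventuallyEq_add_comp hn hKan.contDiffAt hK1.deriv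
      hV.contDiffAt hV0 hVK]
    refine Finset.sum_congr rfl fun c hc ↦ ?_
    rw [iteratedDeriv_const_mul_inv_sub_affine a b (Finset.mem_filter.mp hc).2]

lemma weight_length_mul_prod_le {M : ℕ → ℝ} (hpos : ∀ j, 0 < M j)
    (hlog : Monotone fun j ↦ M (j + 1) / M j) {u w : ℕ → ℝ} (hu0 : ∀ n, 0 ≤ u n) {n : ℕ}
    (c : OrderedFinpartition n)
    (huw : ∀ i, u (c.partSize i) ≤ M (c.partSize i) * w (c.partSize i)) :
    M c.length * ∏ i, u (c.partSize i) ≤ M 1 ^ c.length * M n * ∏ i, w (c.partSize i) := by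
  have hw0 (i : Fin c.length) : 0 ≤ w (c.partSize i) :=
    nonneg_of_mul_nonneg_right ((hu0 _).trans (huw i)) (hpos _)
  have hweight : M c.length * ∏ i, M (c.partSize i) ≤ M 1 ^ c.length * M n := by
    simpa [sum_partSize] using
      weight_card_mul_prod_le hpos hlog Finset.univ (p := c.partSize) fun i _ ↦ c.partSize_pos i
  calc M c.length * ∏ i, u (c.partSize i)
      ≤ M c.length * ∏ i, M (c.partSize i) * w (c.partSize i) :=
        mul_le_mul_of_nonneg_left
          (Finset.prod_le_prod (fun i _ ↦ hu0 _) fun i _ ↦ huw i) (hpos _).le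
    _ = M c.length * (∏ i, M (c.partSize i)) * ∏ i, w (c.partSize i) := by
      rw [Finset.prod_mul_distrib, mul_assoc]
    _ ≤ M 1 ^ c.length * M n * ∏ i, w (c.partSize i) :=
      mul_le_mul_of_nonneg_right hweight (Finset.prod_nonneg fun i _ ↦ hw0 i)

lemma exists_bound_of_le_sum_orderedFinpartition {M : ℕ → ℝ} (hpos : ∀ j, 0 < M j)
    (hlog : Monotone fun j ↦ M (j + 1) / M j) {a b δ : ℝ} (ha : 0 ≤ a) (hb : 0 ≤ b)
    (hδ : 0 < δ) :
    ∃ A R : ℝ, 0 < A ∧ 0 < R ∧ ∀ u : ℕ → ℝ, (∀ n, 0 ≤ u n) → u 1 ≤ δ →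
      (∀ n, 2 ≤ n → u n ≤ ∑ c : OrderedFinpartition n with 2 ≤ c.length,
        a * (b ^ c.length * c.length ! * M c.length) * ∏ i, u (c.partSize i)) →
      ∀ n, 0 < n → u n ≤ A * R ^ n * n ! * M n := by
  obtain ⟨v, hv1, hv, A, R, hA, hR, hvbound⟩ := exists_partition_majorant a (b * M 1)
  set D := δ / M 1 with hD
  have hD0 : 0 < D := div_pos hδ (hpos 1)
  refine ⟨A, R * D, hA, mul_pos hR hD0, fun u hu0 hu1 hu ↦ ?_⟩
  have hmajorant : ∀ n, 0 < n → u n ≤ M n * (D ^ n * v n) := by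
    intro n
    induction n using Nat.strong_induction_on with
    | _ n ih =>
      intro hn
      obtain rfl | hn2 : n = 1 ∨ 2 ≤ n := by lia
      · rwa [hv1, pow_one, mul_one, hD, mul_div_cancel₀ _ (hpos 1).ne']
      have hterm (c : OrderedFinpartition n) (hc : 2 ≤ c.length) :
          M c.length * ∏ i, u (c.partSize i) ≤
            M 1 ^ c.length * M n * (D ^ n * ∏ i, v (c.partSize i)) := by
        have hparts := weight_length_mul_prod_le hpos hlog hu0 (w := fun m ↦ D ^ m * v m) c
          fun i ↦ ih _ (partSize_lt_of_two_le_length c hc i) (c.partSize_pos i)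
        rwa [Finset.prod_mul_distrib, Finset.prod_pow_eq_pow_sum, sum_partSize] at hparts
      rw [hv n hn2, Finset.mul_sum, Finset.mul_sum]
      refine (hu n hn2).trans (Finset.sum_le_sum fun c hc ↦ ?_)
      have hab : 0 ≤ a * (b ^ c.length * c.length !) := by positivity
      calc _ = a * (b ^ c.length * c.length !) * (M c.length * ∏ i, u (c.partSize i)) := by ring
        _ ≤ a * (b ^ c.length * c.length !) *
            (M 1 ^ c.length * M n * (D ^ n * ∏ i, v (c.partSize i))) :=
          mul_le_mul_of_nonneg_left (hterm c (Finset.mem_filter.mp hc).2) hab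
        _ = _ := by ring
  intro n hn
  calc u n ≤ M n * (D ^ n * v n) := hmajorant n hn
    _ ≤ M n * (D ^ n * (A * R ^ n * n !)) := by
      gcongr
      · exact (hpos n).le
      · exact hvbound n
    _ = A * (R * D) ^ n * n ! * M n := by rw [mul_pow]; ring

end Majorant

section Class

variable {E : Type*} [NormedAddCommGroup E] [NormedSpace ℝ E]
  {F : Type*} [NormedAddCommGroup F] [NormedSpace ℝ F]
  {G : Type*} [NormedAddCommGroup G] [NormedSpace ℝ G]

/-- The Denjoy-Carleman class of maps between normed spaces, with the derivatives measured by the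
operator norms of the full multilinear differentials instead of by multi-indices. As in `CRM`, the
weights `M n` multiply `n!`. -/
def DenjoyCarlemanOn (M : ℕ → ℝ) (f : E → F) (U : Set E) : Prop :=
  ContDiffOn ℝ ∞ f U ∧ ∀ K ⊆ U, IsCompact K → ∃ A B : ℝ, 0 < A ∧ 0 < B ∧
    ∀ x ∈ K, ∀ n, ‖iteratedFDeriv ℝ n f x‖ ≤ A * B ^ n * n ! * M n

lemma denjoyCarlemanOn_clm {M : ℕ → ℝ} (hpos : ∀ j, 0 < M j) (L : E →L[ℝ] F) (U : Set E) :
    DenjoyCarlemanOn M L U := by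
  refine ⟨L.contDiff.contDiffOn, fun K _ hK ↦ ?_⟩
  obtain ⟨C, hC⟩ := hK.exists_bound_of_continuousOn L.continuous.continuousOn
  have hM0 := hpos 0
  have hM1 := hpos 1
  refine ⟨|C| / M 0 + ‖L‖ / M 1 + 1, 1, by positivity, one_pos, fun x hx n ↦ ?_⟩
  have hle_div (k : ℕ) (r : ℝ) (hr : r / M k ≤ |C| / M 0 + ‖L‖ / M 1 + 1) :
      r ≤ (|C| / M 0 + ‖L‖ / M 1 + 1) * M k := (div_le_iff₀ (hpos k)).mp hr
  obtain rfl | rfl | hn : n = 0 ∨ n = 1 ∨ 2 ≤ n := by lia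
  · rw [norm_iteratedFDeriv_zero]
    simpa using (hC x hx).trans ((le_abs_self C).trans (hle_div 0 |C| (by
      have : 0 ≤ ‖L‖ / M 1 := by positivity
      linarith)))
  · rw [norm_iteratedFDeriv_one, L.fderiv]
    simpa using hle_div 1 ‖L‖ (by
      have : 0 ≤ |C| / M 0 := by positivity
      linarith)
  · rw [iteratedFDeriv_clm_eq_zero L hn, norm_zero]
    have := hpos n
    positivity

namespace DenjoyCarlemanOn

variable {M : ℕ → ℝ} {U V : Set E} {f g : E → F}

lemma contDiffAt (hf : DenjoyCarlemanOn M f U) (hU : IsOpen U) {x : E} (hx : x ∈ U) :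
    ContDiffAt ℝ ∞ f x :=
  hf.1.contDiffAt (hU.mem_nhds hx)

lemma mono (hf : DenjoyCarlemanOn M f U) (hVU : V ⊆ U) : DenjoyCarlemanOn M f V :=
  ⟨hf.1.mono hVU, fun K hKV ↦ hf.2 K (hKV.trans hVU)⟩

lemma add (hpos : ∀ j, 0 < M j) (hU : IsOpen U) (hf : DenjoyCarlemanOn M f U)
    (hg : DenjoyCarlemanOn M g U) : DenjoyCarlemanOn M (f + g) U := by
  refine ⟨hf.1.add hg.1, fun K hKU hK ↦ ?_⟩
  obtain ⟨A₁, B₁, hA₁, hB₁, hfK⟩ := hf.2 K hKU hK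
  obtain ⟨A₂, B₂, hA₂, hB₂, hgK⟩ := hg.2 K hKU hK
  refine ⟨A₁ + A₂, B₁ + B₂, by positivity, by positivity, fun x hx n ↦ ?_⟩
  have hMn := hpos n
  rw [iteratedFDeriv_add_apply ((hf.contDiffAt hU (hKU hx)).of_le (mod_cast le_top))
    ((hg.contDiffAt hU (hKU hx)).of_le (mod_cast le_top))]
  calc _ ≤ A₁ * B₁ ^ n * n ! * M n + A₂ * B₂ ^ n * n ! * M n :=
        (norm_add_le _ _).trans (add_le_add (hfK x hx n) (hgK x hx n))
    _ ≤ A₁ * (B₁ + B₂) ^ n * n ! * M n + A₂ * (B₁ + B₂) ^ n * n ! * M n := by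
        gcongr <;> linarith
    _ = (A₁ + A₂) * (B₁ + B₂) ^ n * n ! * M n := by ring

lemma sum (hpos : ∀ j, 0 < M j) (hU : IsOpen U) {ι : Type*} (s : Finset ι) {f : ι → E → F}
    (hf : ∀ i ∈ s, DenjoyCarlemanOn M (f i) U) : DenjoyCarlemanOn M (∑ i ∈ s, f i) U := by
  classical
  induction s using Finset.induction_on with
  | empty => exact denjoyCarlemanOn_clm hpos 0 U
  | insert i s hi ih =>
    rw [Finset.sum_insert hi]
    exact (hf i (Finset.mem_insert_self i s)).add hpos hU
      (ih fun j hj ↦ hf j (Finset.mem_insert_of_mem hj))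

lemma clm_comp (hU : IsOpen U) (hf : DenjoyCarlemanOn M f U) (L : F →L[ℝ] G) :
    DenjoyCarlemanOn M (L ∘ f) U := by
  refine ⟨L.contDiff.comp_contDiffOn hf.1, fun K hKU hK ↦ ?_⟩
  obtain ⟨A, B, hA, hB, hfK⟩ := hf.2 K hKU hK
  refine ⟨(‖L‖ + 1) * A, B, by positivity, hB, fun x hx n ↦ ?_⟩
  calc _ ≤ ‖L‖ * ‖iteratedFDeriv ℝ n f x‖ :=
        L.norm_iteratedFDeriv_comp_left (hf.contDiffAt hU (hKU hx)) (mod_cast le_top)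
    _ ≤ (‖L‖ + 1) * (A * B ^ n * n ! * M n) := by
        gcongr
        · linarith
        · exact hfK x hx n
    _ = (‖L‖ + 1) * A * B ^ n * n ! * M n := by ring

lemma comp_clm (hpos : ∀ j, 0 < M j) (hU : IsOpen U) (hf : DenjoyCarlemanOn M f U)
    (L : G →L[ℝ] E) : DenjoyCarlemanOn M (f ∘ L) (L ⁻¹' U) := by
  have hcd : ContDiffOn ℝ ∞ (f ∘ L) (L ⁻¹' U) := hf.1.comp_continuousLinearMap L
  refine ⟨hcd, fun K hKU hK ↦ ?_⟩
  obtain ⟨A, B, hA, hB, hfK⟩ := hf.2 (L '' K) (image_subset_iff.mpr hKU) (hK.image L.continuous)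
  refine ⟨A, B * (‖L‖ + 1), hA, by positivity, fun x hx n ↦ ?_⟩
  have hMn := hpos n
  have hderiv : iteratedFDeriv ℝ n (f ∘ L) x =
      (iteratedFDeriv ℝ n f (L x)).compContinuousLinearMap fun _ ↦ L := by
    have hLU : IsOpen (L ⁻¹' U) := hU.preimage L.continuous
    rw [← iteratedFDerivWithin_of_isOpen n hLU (hKU hx),
      ← iteratedFDerivWithin_of_isOpen n hU (hKU hx)]
    exact L.iteratedFDerivWithin_comp_right hf.1 hU.uniqueDiffOn hLU.uniqueDiffOn (hKU hx)
      (mod_cast le_top)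
  calc ‖iteratedFDeriv ℝ n (f ∘ L) x‖ ≤ ‖iteratedFDeriv ℝ n f (L x)‖ * ∏ _i : Fin n, ‖L‖ := by
        rw [hderiv]
        exact ContinuousMultilinearMap.norm_compContinuousLinearMap_le _ _
    _ ≤ A * B ^ n * n ! * M n * (‖L‖ + 1) ^ n := by
        rw [Finset.prod_const, Finset.card_univ, Fintype.card_fin]
        gcongr
        · exact hfK _ (mem_image_of_mem L hx) n
        · linarith
    _ = A * (B * (‖L‖ + 1)) ^ n * n ! * M n := by rw [mul_pow]; ring

lemma prodMk (hpos : ∀ j, 0 < M j) (hU : IsOpen U) (hf : DenjoyCarlemanOn M f U) {g : E → G}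
    (hg : DenjoyCarlemanOn M g U) : DenjoyCarlemanOn M (fun x ↦ (f x, g x)) U := by
  have hsum := (hf.clm_comp hU (.inl ℝ F G)).add hpos hU (hg.clm_comp hU (.inr ℝ F G))
  convert hsum using 1
  ext x <;> simp

lemma pi (hpos : ∀ j, 0 < M j) (hU : IsOpen U) {ι : Type*} [Fintype ι] {f : ι → E → F}
    (hf : ∀ i, DenjoyCarlemanOn M (f i) U) : DenjoyCarlemanOn M (fun x i ↦ f i x) U := by
  classical
  have hsum := sum hpos hU Finset.univ fun i _ ↦
    (hf i).clm_comp hU (.single ℝ (fun _ : ι ↦ F) i)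
  convert hsum using 1
  ext x i
  simp [Finset.sum_apply, Pi.single_apply]

end DenjoyCarlemanOn

end Class

section InverseFunction

variable {M : ℕ → ℝ} (hpos : ∀ j, 0 < M j) (hlog : Monotone fun j ↦ M (j + 1) / M j)
include hpos hlog

lemma exists_bound_iteratedFDeriv_inverse (E F : Type*) [NormedAddCommGroup E] [NormedSpace ℝ E]
    [NormedAddCommGroup F] [NormedSpace ℝ F] {a b δ : ℝ} (ha : 0 ≤ a) (hb : 0 ≤ b) (hδ : 0 < δ) :
    ∃ A R : ℝ, 0 < A ∧ 0 < R ∧ ∀ (f : F → E) (g : E → F) (x : E),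
      ContDiffAt ℝ ∞ f (g x) → ContDiffAt ℝ ∞ g x →
      f ∘ g =ᶠ[𝓝 x] id → g ∘ f =ᶠ[𝓝 (g x)] id → ‖fderiv ℝ g x‖ ≤ δ →
      (∀ n, ‖iteratedFDeriv ℝ n f (g x)‖ ≤ a * b ^ n * n ! * M n) →
      ∀ n, 0 < n → ‖iteratedFDeriv ℝ n g x‖ ≤ A * R ^ n * n ! * M n := by
  obtain ⟨A, R, hA, hR, hbound⟩ := exists_bound_of_le_sum_orderedFinpartition hpos hlog
    (mul_nonneg hδ.le ha) hb hδ
  refine ⟨A, R, hA, hR, fun f g x hf hg hfg hgf hgδ hfab ↦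
    hbound _ (fun n ↦ norm_nonneg _) (by rwa [norm_iteratedFDeriv_one]) fun n hn ↦ ?_⟩
  refine (norm_iteratedFDeriv_inverse_le hn (hf.of_le (mod_cast le_top))
    (hg.of_le (mod_cast le_top)) hfg hgf).trans (Finset.sum_le_sum fun c _ ↦ ?_)
  calc _ ≤ δ * (a * b ^ c.length * c.length ! * M c.length) *
        ∏ i, ‖iteratedFDeriv ℝ (c.partSize i) g x‖ := by
        gcongr
        exact hfab _
    _ = _ := by ring

namespace DenjoyCarlemanOn

variable {E : Type*} [NormedAddCommGroup E] [NormedSpace ℝ E]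
  {F : Type*} [NormedAddCommGroup F] [NormedSpace ℝ F]

lemma symm {e : OpenPartialHomeomorph E F} (he : DenjoyCarlemanOn M e e.source)
    (he' : ContDiffOn ℝ ∞ e.symm e.target) : DenjoyCarlemanOn M e.symm e.target := by
  refine ⟨he', fun K hKe hK ↦ ?_⟩
  have hcont : ContinuousOn e.symm K := he'.continuousOn.mono hKe
  obtain ⟨a, b, ha, hb, heK⟩ := he.2 (e.symm '' K)
    (image_subset_iff.mpr fun x hx ↦ e.map_target (hKe hx)) (hK.image_of_continuousOn hcont)
  obtain ⟨C, hC⟩ := hK.exists_bound_of_continuousOn hcont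
  obtain ⟨δ, hδ⟩ := hK.exists_bound_of_continuousOn
    ((he'.continuousOn_fderiv_of_isOpen e.open_target (by simp)).mono hKe)
  obtain ⟨A, R, hA, hR, hbound⟩ := exists_bound_iteratedFDeriv_inverse hpos hlog F E ha.le hb.le
    (δ := |δ| + 1) (by positivity)
  have hM0 := hpos 0
  refine ⟨A + |C| / M 0, R, by positivity, hR, fun x hx n ↦ ?_⟩
  obtain rfl | hn := n.eq_zero_or_pos
  · have hCx : ‖e.symm x‖ ≤ |C| / M 0 * M 0 := by
      rw [div_mul_cancel₀ _ hM0.ne']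
      exact (hC x hx).trans (le_abs_self C)
    rw [norm_iteratedFDeriv_zero, pow_zero, Nat.factorial_zero, Nat.cast_one, mul_one, mul_one,
      add_mul]
    linarith [mul_pos hA hM0]
  · have hMn := hpos n
    have hxe := hKe hx
    refine (hbound e e.symm x (he.contDiffAt e.open_source (e.map_target hxe))
      (he'.contDiffAt (e.open_target.mem_nhds hxe)) (e.eventually_right_inverse hxe)
      (e.eventually_left_inverse (e.map_target hxe))
      ((hδ x hx).trans (by linarith [le_abs_self δ]))
      (heK _ (mem_image_of_mem _ hx)) n hn).trans ?_
    gcongr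
    exact le_add_of_nonneg_right (by positivity)

theorem exists_localInverse [CompleteSpace E] {f : E → F} {U : Set E} (hU : IsOpen U)
    (hf : DenjoyCarlemanOn M f U) {c : E} (hc : c ∈ U) (hf' : (fderiv ℝ f c).IsInvertible) :
    ∃ e : OpenPartialHomeomorph E F, ⇑e = f ∧ c ∈ e.source ∧ e.source ⊆ U ∧
      DenjoyCarlemanOn M e.symm e.target := by
  obtain ⟨L, hL⟩ := hf'
  have hLc : HasFDerivAt f (L : E →L[ℝ] F) c :=
    hL ▸ ((hf.contDiffAt hU hc).differentiableAt (by simp)).hasFDerivAt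
  set e₀ := (hf.contDiffAt hU hc).toOpenPartialHomeomorph f hLc (by simp)
  set S := U ∩ fderiv ℝ f ⁻¹' range ((↑) : (E ≃L[ℝ] F) → E →L[ℝ] F)
  have hS : IsOpen S := (hf.1.continuousOn_fderiv_of_isOpen hU (by simp)).isOpen_inter_preimage hU
    ContinuousLinearEquiv.isOpen
  set e := e₀.restrOpen S hS
  have heS : e.source ⊆ S := inter_subset_right
  refine ⟨e, rfl, ⟨?_, hc, L, hL⟩, heS.trans inter_subset_left, ?_⟩
  · exact (hf.contDiffAt hU hc).mem_toOpenPartialHomeomorph_source hLc (by simp)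
  refine symm hpos hlog (hf.mono (heS.trans inter_subset_left)) fun y hy ↦ ?_
  obtain ⟨hyU, L', hL'⟩ := heS (e.map_target hy)
  have hfy := hf.contDiffAt hU hyU
  have hL'y : HasFDerivAt f (L' : E →L[ℝ] F) (e.symm y) :=
    hL' ▸ (hfy.differentiableAt (by simp)).hasFDerivAt
  exact (e.contDiffAt_symm hy hL'y hfy).contDiffWithinAt

end DenjoyCarlemanOn

end InverseFunction

section ImplicitFunction

variable {E : Type*} [NormedAddCommGroup E] [NormedSpace ℝ E]
  {F : Type*} [NormedAddCommGroup F] [NormedSpace ℝ F]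
  {G : Type*} [NormedAddCommGroup G] [NormedSpace ℝ G]

lemma isInvertible_fst_prod {A : E × F →L[ℝ] G} (hA : (A ∘L .inr ℝ E F).IsInvertible) :
    ((ContinuousLinearMap.fst ℝ E F).prod A).IsInvertible := by
  obtain ⟨L, hL⟩ := hA
  refine ⟨(ContinuousLinearEquiv.refl ℝ E).skewProd L (A ∘L .inl ℝ E F), ?_⟩
  have hLx (x : F) : L x = A (0, x) := congr($hL x)
  have hA0 : A (0, 0) = 0 := map_zero A
  ext x <;> simp [hLx, hA0]

theorem DenjoyCarlemanOn.exists_implicitFunction [CompleteSpace E] [CompleteSpace F]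
    {M : ℕ → ℝ} (hpos : ∀ j, 0 < M j) (hlog : Monotone fun j ↦ M (j + 1) / M j)
    {f : E × F → G} {U : Set (E × F)} (hU : IsOpen U) (hf : DenjoyCarlemanOn M f U)
    {c : E × F} (hc : c ∈ U) (hc0 : f c = 0)
    (hf' : (fderiv ℝ f c ∘L .inr ℝ E F).IsInvertible) :
    ∃ (V : Set E) (W : Set F), IsOpen V ∧ IsOpen W ∧ c.1 ∈ V ∧ c.2 ∈ W ∧ V ×ˢ W ⊆ U ∧
      ∃ g : E → F, DenjoyCarlemanOn M g V ∧ g c.1 = c.2 ∧ MapsTo g V W ∧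
        ∀ x ∈ V, f (x, g x) = 0 := by
  have hΨ : DenjoyCarlemanOn M (fun p ↦ (p.1, f p)) U :=
    (denjoyCarlemanOn_clm hpos (.fst ℝ E F) U).prodMk hpos hU hf
  have hΨ' : (fderiv ℝ (fun p ↦ (p.1, f p)) c).IsInvertible := by
    have hfc := ((hf.contDiffAt hU hc).differentiableAt (by simp)).hasFDerivAt
    rw [(hasFDerivAt_fst.prodMk hfc).fderiv]
    exact isInvertible_fst_prod hf'
  obtain ⟨e, he, hce, heU, hsymm⟩ := hΨ.exists_localInverse hpos hlog hU hc hΨ'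
  obtain ⟨V₀, W, hV₀, hW, hcV₀, hcW, hVW⟩ := isOpen_prod_iff.mp e.open_source c.1 c.2 hce
  set T : Set E := ContinuousLinearMap.inl ℝ E G ⁻¹' e.target
  have hT : IsOpen T := e.open_target.preimage (ContinuousLinearMap.inl ℝ E G).continuous
  set g : E → F := fun x ↦ (e.symm (x, 0)).2
  have hg : DenjoyCarlemanOn M g T :=
    (hsymm.comp_clm hpos e.open_target (.inl ℝ E G)).clm_comp hT (.snd ℝ E F)
  have hgraph (x : E) (hx : x ∈ T) : e.symm (x, 0) = (x, g x) ∧ f (x, g x) = 0 := by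
    have hright : ((e.symm (x, 0)).1, f (e.symm (x, 0))) = (x, 0) := by
      have hex := e.right_inv (show (x, 0) ∈ e.target from hx)
      rwa [he] at hex
    have hpair : e.symm (x, 0) = (x, g x) := Prod.ext (Prod.ext_iff.mp hright).1 rfl
    exact ⟨hpair, hpair ▸ (Prod.ext_iff.mp hright).2⟩
  have hec : e c = (c.1, 0) := by rw [he, ← hc0]
  have hcT : c.1 ∈ T := show (c.1, 0) ∈ e.target from hec ▸ e.map_source hce
  have hgc : g c.1 = c.2 := by
    change (e.symm (c.1, 0)).2 = c.2
    rw [← hec, e.left_inv hce]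
  refine ⟨V₀ ∩ (T ∩ g ⁻¹' W), W, hV₀.inter (hg.1.continuousOn.isOpen_inter_preimage hT hW), hW,
    ⟨hcV₀, hcT, by rwa [mem_preimage, hgc]⟩, hcW,
    (prod_mono inter_subset_left subset_rfl).trans (hVW.trans heU), g,
    hg.mono (inter_subset_right.trans inter_subset_left), hgc, fun x hx ↦ hx.2.2,
    fun x hx ↦ (hgraph x hx.2.1).2⟩

end ImplicitFunction

section MultiIndex

variable {ι : Type} [Fintype ι]

/-- The directions in which the multi-index derivative `D^α` differentiates, listed with
multiplicity in the order used by `mderiv`. -/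
noncomputable def multiIndexList (α : ι → ℕ) : List ι :=
  (Finset.univ : Finset ι).toList.flatMap fun i ↦ List.replicate (α i) i

lemma length_multiIndexList (α : ι → ℕ) : (multiIndexList α).length = ∑ i, α i := by
  simp [multiIndexList, List.length_flatMap, Finset.sum_map_toList]

lemma factorial_sum_le_card_pow_mul_prod_factorial (α : ι → ℕ) :
    (∑ i, α i)! ≤ Fintype.card ι ^ (∑ i, α i) * ∏ i, (α i)! := by
  classical
  have hmult : Nat.multinomial Finset.univ α ≤ Fintype.card ι ^ (∑ i, α i) := by
    have hsum := Finset.sum_pow_eq_sum_piAntidiag (Finset.univ : Finset ι) (fun _ ↦ (1 : ℕ))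
      (∑ i, α i)
    simp only [Finset.sum_const, Finset.card_univ, smul_eq_mul, mul_one, one_pow,
      Finset.prod_const_one] at hsum
    rw [hsum]
    exact Finset.single_le_sum (f := Nat.multinomial Finset.univ) (fun _ _ ↦ Nat.zero_le _)
      (by simp)
  rw [← Nat.multinomial_spec Finset.univ α, mul_comm]
  gcongr

variable [DecidableEq ι]

lemma count_multiIndexList (α : ι → ℕ) (i : ι) : (multiIndexList α).count i = α i := by
  have hcount : (List.count i ∘ fun j ↦ List.replicate (α j) j) =
      fun j ↦ if j = i then α i else 0 := by
    funext j
    by_cases h : j = i <;> simp [List.count_replicate, h]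
  rw [multiIndexList, List.count_flatMap, hcount, Finset.sum_map_toList]
  simp

lemma norm_le_of_norm_apply_single_le {𝕜 W κ : Type*} [RCLike 𝕜] [NormedAddCommGroup W]
    [NormedSpace 𝕜 W] [Fintype κ]
    (T : ContinuousMultilinearMap 𝕜 (fun _ : κ ↦ EuclideanSpace 𝕜 ι) W) {C : ℝ} (hC : 0 ≤ C)
    (hT : ∀ s : κ → ι, ‖T fun k ↦ EuclideanSpace.single (s k) 1‖ ≤ C) :
    ‖T‖ ≤ Fintype.card ι ^ Fintype.card κ * C := by
  classical
  refine T.opNorm_le_bound (by positivity) fun v ↦ ?_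
  have hv : v = fun k ↦ ∑ i, v k i • EuclideanSpace.single i (1 : 𝕜) := by
    funext k
    ext j
    simp [Finset.sum_apply, Pi.single_apply]
  have hTv : T v = ∑ s : κ → ι, (∏ k, v k (s k)) • T fun k ↦ EuclideanSpace.single (s k) 1 := by
    conv_lhs => rw [hv]
    simp_rw [T.map_sum, T.map_smul_univ]
  calc ‖T v‖ ≤ ∑ _s : κ → ι, (∏ k, ‖v k‖) * C := by
        rw [hTv]
        refine norm_sum_le_of_le _ fun s _ ↦ ?_
        rw [norm_smul, norm_prod]
        gcongr with k
        · exact PiLp.norm_apply_le (v k) (s k)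
        · exact hT s
    _ = Fintype.card ι ^ Fintype.card κ * C * ∏ k, ‖v k‖ := by
        simp only [Finset.sum_const, Finset.card_univ, Fintype.card_fun, nsmul_eq_mul]
        push_cast
        ring

variable {W : Type} [NormedAddCommGroup W] [NormedSpace ℝ W]
  {U : Set (EuclideanSpace ℝ ι)} {f : EuclideanSpace ℝ ι → W}

lemma mderiv_eq_foldr_pd (α : ι → ℕ) (f : EuclideanSpace ℝ ι → W) :
    mderiv α f = (multiIndexList α).foldr pd f := by
  have hiterate (i : ι) (n : ℕ) (g : EuclideanSpace ℝ ι → W) :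
      (pd i)^[n] g = (List.replicate n i).foldr pd g := by
    induction n with
    | zero => rfl
    | succ n ih => rw [Function.iterate_succ_apply', ih, List.replicate_succ, List.foldr_cons]
  rw [mderiv, multiIndexList]
  induction (Finset.univ : Finset ι).toList with
  | nil => rfl
  | cons i l ih => rw [List.foldr_cons, ih, List.flatMap_cons, List.foldr_append, hiterate]

lemma contDiffOn_pd (hU : IsOpen U) (hf : ContDiffOn ℝ ∞ f U) (i : ι) :
    ContDiffOn ℝ ∞ (pd i f) U :=
  (hf.fderiv_of_isOpen hU (by simp)).clm_apply contDiffOn_const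

lemma contDiffOn_foldr_pd (hU : IsOpen U) (hf : ContDiffOn ℝ ∞ f U) (l : List ι) :
    ContDiffOn ℝ ∞ (l.foldr pd f) U := by
  induction l with
  | nil => exact hf
  | cons i l ih => exact contDiffOn_pd hU ih i

lemma pd_pd_comm {x : EuclideanSpace ℝ ι} (hf : ContDiffAt ℝ ∞ f x) (i j : ι) :
    pd i (pd j f) x = pd j (pd i f) x := by
  have hdiff : DifferentiableAt ℝ (fderiv ℝ f) x :=
    (hf.fderiv_right (m := ∞) (by simp)).differentiableAt (by simp)
  have hpd (a b : ι) : pd a (pd b f) x =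
      fderiv ℝ (fderiv ℝ f) x (EuclideanSpace.single a 1) (EuclideanSpace.single b 1) := by
    change fderiv ℝ (fun y ↦ fderiv ℝ f y (EuclideanSpace.single b 1)) x _ = _
    simp [fderiv_clm_apply hdiff (differentiableAt_const _)]
  rw [hpd, hpd]
  exact hf.isSymmSndFDerivAt (by simpa using WithTop.coe_le_coe.mpr (le_top : (2 : ℕ∞) ≤ ⊤)) _ _

lemma eqOn_foldr_pd_of_perm (hU : IsOpen U) (hf : ContDiffOn ℝ ∞ f U) {l l' : List ι}
    (h : l.Perm l') : EqOn (l.foldr pd f) (l'.foldr pd f) U := by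
  induction h with
  | nil => exact eqOn_refl _ _
  | trans _ _ h₁ h₂ => exact h₁.trans h₂
  | cons i _ ih =>
    intro x hx
    simp only [List.foldr_cons, pd, (ih.eventuallyEq_of_mem (hU.mem_nhds hx)).fderiv_eq]
  | swap i j l =>
    exact fun x hx ↦ pd_pd_comm ((contDiffOn_foldr_pd hU hf l).contDiffAt (hU.mem_nhds hx)) j i

lemma foldr_pd_ofFn (hU : IsOpen U) (hf : ContDiffOn ℝ ∞ f U) {n : ℕ} (s : Fin n → ι)
    {x : EuclideanSpace ℝ ι} (hx : x ∈ U) :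
    (List.ofFn s).foldr pd f x =
      iteratedFDeriv ℝ n f x fun k ↦ EuclideanSpace.single (s k) 1 := by
  induction n generalizing x with
  | zero => simp
  | succ n ih =>
    have hih : (List.ofFn fun k ↦ s k.succ).foldr pd f =ᶠ[𝓝 x]
        fun y ↦ iteratedFDeriv ℝ n f y fun k ↦ EuclideanSpace.single (s k.succ) 1 := by
      filter_upwards [hU.mem_nhds hx] with y hy using ih _ hy
    have hdiff : DifferentiableAt ℝ (iteratedFDeriv ℝ n f) x :=
      (hf.contDiffAt (hU.mem_nhds hx)).differentiableAt_iteratedFDeriv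
        (mod_cast WithTop.coe_lt_top n)
    rw [List.ofFn_succ, List.foldr_cons, pd, hih.fderiv_eq, iteratedFDeriv_succ_apply_left,
      fderiv_continuousMultilinear_apply_const_apply hdiff]
    rfl

lemma norm_mderiv_le (hU : IsOpen U) (hf : ContDiffOn ℝ ∞ f U) (α : ι → ℕ)
    {x : EuclideanSpace ℝ ι} (hx : x ∈ U) :
    ‖mderiv α f x‖ ≤ ‖iteratedFDeriv ℝ (∑ i, α i) f x‖ := by
  have hderiv := foldr_pd_ofFn hU hf (multiIndexList α).get hx
  rw [List.ofFn_get] at hderiv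
  rw [mderiv_eq_foldr_pd, ← length_multiIndexList, hderiv]
  simpa using (iteratedFDeriv ℝ _ f x).le_opNorm
    fun k ↦ EuclideanSpace.single ((multiIndexList α).get k) 1

lemma norm_iteratedFDeriv_le_of_norm_mderiv_le (hU : IsOpen U) (hf : ContDiffOn ℝ ∞ f U)
    {n : ℕ} {C : ℝ} (hC : 0 ≤ C) {x : EuclideanSpace ℝ ι} (hx : x ∈ U)
    (h : ∀ α : ι → ℕ, ∑ i, α i = n → ‖mderiv α f x‖ ≤ C) :
    ‖iteratedFDeriv ℝ n f x‖ ≤ Fintype.card ι ^ n * C := by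
  suffices hs : ∀ s : Fin n → ι,
      ‖iteratedFDeriv ℝ n f x fun k ↦ EuclideanSpace.single (s k) 1‖ ≤ C by
    simpa using norm_le_of_norm_apply_single_le (iteratedFDeriv ℝ n f x) hC hs
  intro s
  set α : ι → ℕ := fun i ↦ (List.ofFn s).count i
  have hperm : (List.ofFn s).Perm (multiIndexList α) :=
    List.perm_iff_count.mpr fun i ↦ (count_multiIndexList α i).symm
  have hα : ∑ i, α i = n := by
    rw [← length_multiIndexList, ← hperm.length_eq, List.length_ofFn]
  rw [← foldr_pd_ofFn hU hf s hx, eqOn_foldr_pd_of_perm hU hf hperm hx, ← mderiv_eq_foldr_pd]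
  exact h α hα

lemma CRM.denjoyCarlemanOn {M : ℕ → ℝ} (hpos : ∀ j, 0 < M j) (hU : IsOpen U)
    {f : EuclideanSpace ℝ ι → ℝ} (hf : CRM M U f) : DenjoyCarlemanOn M f U := by
  refine ⟨hf.1, fun K hKU hK ↦ ?_⟩
  obtain ⟨A, B, hA, hB, hAB⟩ := hf.2 K hKU hK
  refine ⟨A, (Fintype.card ι + 1) * B, hA, by positivity, fun x hx n ↦ ?_⟩
  have hMn := hpos n
  have hmderiv (α : ι → ℕ) (hα : ∑ i, α i = n) : ‖mderiv α f x‖ ≤ n ! * (A * B ^ n * M n) := by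
    subst hα
    have hαx := hAB x hx α
    rw [one_div, inv_mul_le_iff₀ (by positivity)] at hαx
    refine hαx.trans ?_
    gcongr
    exact_mod_cast Nat.le_of_dvd (Nat.factorial_pos _)
      (Nat.prod_factorial_dvd_factorial_sum Finset.univ α)
  calc ‖iteratedFDeriv ℝ n f x‖ ≤ Fintype.card ι ^ n * (n ! * (A * B ^ n * M n)) :=
        norm_iteratedFDeriv_le_of_norm_mderiv_le hU hf.1 (by positivity) (hKU hx) hmderiv
    _ ≤ (Fintype.card ι + 1) ^ n * (n ! * (A * B ^ n * M n)) := by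
        gcongr
        linarith
    _ = A * ((Fintype.card ι + 1) * B) ^ n * n ! * M n := by rw [mul_pow]; ring

lemma DenjoyCarlemanOn.crm {M : ℕ → ℝ} (hpos : ∀ j, 0 < M j) (hU : IsOpen U)
    {f : EuclideanSpace ℝ ι → ℝ} (hf : DenjoyCarlemanOn M f U) : CRM M U f := by
  refine ⟨hf.1, fun K hKU hK ↦ ?_⟩
  obtain ⟨A, B, hA, hB, hAB⟩ := hf.2 K hKU hK
  refine ⟨A, (Fintype.card ι + 1) * B, hA, by positivity, fun x hx α ↦ ?_⟩
  set n := ∑ i, α i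
  have hMn := hpos n
  have hfactorial : (n ! : ℝ) ≤ (Fintype.card ι + 1) ^ n * ∏ i, ((α i)! : ℝ) :=
    calc (n ! : ℝ) ≤ Fintype.card ι ^ n * ∏ i, ((α i)! : ℝ) :=
          mod_cast factorial_sum_le_card_pow_mul_prod_factorial α
      _ ≤ (Fintype.card ι + 1) ^ n * ∏ i, ((α i)! : ℝ) := by
          gcongr
          linarith
  rw [one_div, inv_mul_le_iff₀ (by positivity)]
  calc |mderiv α f x| ≤ A * B ^ n * n ! * M n :=
        (norm_mderiv_le hU hf.1 α (hKU hx)).trans (hAB x hx n)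
    _ ≤ A * B ^ n * ((Fintype.card ι + 1) ^ n * ∏ i, ((α i)! : ℝ)) * M n := by gcongr
    _ = (∏ i, ((α i)! : ℝ)) * (A * ((Fintype.card ι + 1) * B) ^ n * M n) := by
        rw [mul_pow]
        ring

end MultiIndex

section Coordinates

lemma isInvertible_of_isUnit_matrix {𝕜 n : Type*} [RCLike 𝕜] [Fintype n] [DecidableEq n]
    {J : Matrix n n 𝕜} (hJ : IsUnit J) {L : EuclideanSpace 𝕜 n →L[𝕜] n → 𝕜}
    (hL : ∀ i j, L (EuclideanSpace.single j 1) i = J i j) : L.IsInvertible := by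
  let := hJ.invertible
  refine ⟨(EuclideanSpace.equiv n 𝕜).trans
    (J.toLinearEquiv' inferInstance).toContinuousLinearEquiv, ?_⟩
  refine ContinuousLinearMap.coe_injective
    ((EuclideanSpace.basisFun n 𝕜).toBasis.ext fun j ↦ funext fun i ↦ ?_)
  have hcol : J.mulVec (EuclideanSpace.equiv n 𝕜 (EuclideanSpace.single j 1)) i = J i j :=
    congrFun (J.mulVec_single_one j) i
  simpa [hL, Matrix.toLinearEquiv'] using hcol

variable {N P : ℕ}

/-- The identification of `ℝ^N × ℝ^P` with `EuclideanSpace ℝ (Fin N ⊕ Fin P)` given by `pairE`. -/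
noncomputable def pairEquiv (N P : ℕ) : (EuclideanSpace ℝ (Fin N) × EuclideanSpace ℝ (Fin P)) ≃L[ℝ]
    EuclideanSpace ℝ (Fin N ⊕ Fin P) :=
  EuclideanSpace.sumEquivProd.symm

lemma pairEquiv_apply (p : EuclideanSpace ℝ (Fin N) × EuclideanSpace ℝ (Fin P)) :
    pairEquiv N P p = pairE p.1 p.2 := by
  ext (i | j) <;> rfl

lemma pairE_fstE_sndE (z : EuclideanSpace ℝ (Fin N ⊕ Fin P)) : pairE (fstE z) (sndE z) = z := by
  ext (i | j) <;> rfl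

lemma pairE_zero_single (j : Fin P) : pairE (0 : EuclideanSpace ℝ (Fin N))
    (EuclideanSpace.single j 1) = EuclideanSpace.single (Sum.inr j) 1 := by
  ext (i | i) <;> simp [pairE]

lemma hasFDerivAt_comp_pairE {W : Type*} [NormedAddCommGroup W] [NormedSpace ℝ W]
    {f : EuclideanSpace ℝ (Fin N ⊕ Fin P) → W} {c : EuclideanSpace ℝ (Fin N ⊕ Fin P)}
    (hf : DifferentiableAt ℝ f c) :
    HasFDerivAt (fun p ↦ f (pairE p.1 p.2)) (fderiv ℝ f c ∘L (pairEquiv N P : _ →L[ℝ] _))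
      (fstE c, sndE c) := by
  simp_rw [← pairEquiv_apply]
  refine HasFDerivAt.comp _ ?_ (pairEquiv N P).hasFDerivAt
  rw [pairEquiv_apply, pairE_fstE_sndE]
  exact hf.hasFDerivAt

lemma DenjoyCarlemanOn.comp_pairE {M : ℕ → ℝ} (hpos : ∀ j, 0 < M j) {κ : Type*} [Fintype κ]
    {U : Set (EuclideanSpace ℝ (Fin N ⊕ Fin P))} (hU : IsOpen U)
    {f : κ → EuclideanSpace ℝ (Fin N ⊕ Fin P) → ℝ} (hf : ∀ i, DenjoyCarlemanOn M (f i) U) :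
    DenjoyCarlemanOn M (fun p i ↦ f i (pairE p.1 p.2)) (pairEquiv N P ⁻¹' U) := by
  simp_rw [← pairEquiv_apply]
  exact .comp_clm hpos hU (.pi hpos hU hf) (pairEquiv N P).toContinuousLinearMap

lemma isInvertible_fderiv_comp_inr {f : Fin P → EuclideanSpace ℝ (Fin N ⊕ Fin P) → ℝ}
    {c : EuclideanSpace ℝ (Fin N ⊕ Fin P)} (hf : ∀ i, DifferentiableAt ℝ (f i) c)
    (hjac : IsUnit (Matrix.of fun i j ↦ pd (Sum.inr j) (f i) c)) :
    (fderiv ℝ (fun p i ↦ f i (pairE p.1 p.2)) (fstE c, sndE c) ∘L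
      .inr ℝ (EuclideanSpace ℝ (Fin N)) (EuclideanSpace ℝ (Fin P))).IsInvertible := by
  refine isInvertible_of_isUnit_matrix hjac fun i j ↦ ?_
  rw [(hasFDerivAt_pi.mpr fun i ↦ hasFDerivAt_comp_pairE (hf i)).fderiv]
  simp [pd, pairEquiv_apply, pairE_zero_single]

end Coordinates

theorem stmt8_general {N P : ℕ} (M : ℕ → ℝ) (hpos : ∀ j, 0 < M j)
    (hlog : ∀ j : ℕ, M (j + 1) / M j ≤ M (j + 2) / M (j + 1))
    (U : Set (EuclideanSpace ℝ (Fin N ⊕ Fin P))) (hUopen : IsOpen U)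
    (f : Fin P → EuclideanSpace ℝ (Fin N ⊕ Fin P) → ℝ) (hf : ∀ i, CRM M U (f i))
    (c : EuclideanSpace ℝ (Fin N ⊕ Fin P)) (hc : c ∈ U) (hzero : ∀ i, f i c = 0)
    (hjac : IsUnit (Matrix.of fun i j ↦ pd (Sum.inr j) (f i) c)) :
    ∃ V : Set (EuclideanSpace ℝ (Fin N)), ∃ W : Set (EuclideanSpace ℝ (Fin P)),
      IsOpen V ∧ IsOpen W ∧ fstE c ∈ V ∧ sndE c ∈ W ∧
      (∀ x ∈ V, ∀ y ∈ W, pairE x y ∈ U) ∧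
      ∃ g : Fin P → EuclideanSpace ℝ (Fin N) → ℝ,
        (∀ i, CRM M V (g i)) ∧
        (∀ i, g i (fstE c) = sndE c i) ∧
        (∀ x ∈ V, (EuclideanSpace.equiv (Fin P) ℝ).symm (fun j ↦ g j x) ∈ W) ∧
        (∀ x ∈ V, ∀ i,
          f i (pairE x ((EuclideanSpace.equiv (Fin P) ℝ).symm (fun j ↦ g j x))) = 0) := by
  have hfU (i : Fin P) : DenjoyCarlemanOn M (f i) U := (hf i).denjoyCarlemanOn hpos hUopen
  have hdiff (i : Fin P) : DifferentiableAt ℝ (f i) c :=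
    ((hfU i).contDiffAt hUopen hc).differentiableAt (by simp)
  have hopen : IsOpen (pairEquiv N P ⁻¹' U) := hUopen.preimage (pairEquiv N P).continuous
  have hcU : (fstE c, sndE c) ∈ pairEquiv N P ⁻¹' U := by
    rwa [mem_preimage, pairEquiv_apply, pairE_fstE_sndE]
  obtain ⟨V, W, hV, hW, hcV, hcW, hVW, g, hg, hgc, hgW, hfg⟩ :=
    (DenjoyCarlemanOn.comp_pairE hpos hUopen hfU).exists_implicitFunction hpos
      (monotone_nat_of_le_succ hlog) hopen hcU
      (funext fun i ↦ by rw [pairE_fstE_sndE, hzero, Pi.zero_apply])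
      (isInvertible_fderiv_comp_inr hdiff hjac)
  refine ⟨V, W, hV, hW, hcV, hcW, ?_, fun i x ↦ g x i, ?_, ?_, ?_, ?_⟩
  · exact fun x hx y hy ↦ pairEquiv_apply (x, y) ▸ hVW ⟨hx, hy⟩
  · exact fun i ↦ (hg.clm_comp hV (EuclideanSpace.proj i)).crm hpos hV
  · exact fun i ↦ congr($hgc i)
  · exact hgW
  · exact fun x hx i ↦ congrFun (hfg x hx) i

/-- Implicit Function Theorem in a Denjoy-Carleman class. -/
theorem stmt8 {N P : ℕ} (M : ℕ → ℝ)
    (hpos : ∀ j, 0 < M j) (hmono : Monotone M) (hM0 : M 0 = 1)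
    (hlog : ∀ j : ℕ, M (j+1) / M j ≤ M (j+2) / M (j+1))
    (hgrow : Filter.Tendsto (fun j : ℕ => M j ^ ((1 : ℝ) / j)) Filter.atTop Filter.atTop)
    (hder : ∃ C : ℝ, ∀ j : ℕ, 1 ≤ j → (M (j+1) / M j) ^ ((1 : ℝ) / j) ≤ C)
    (U : Set (EuclideanSpace ℝ (Fin N ⊕ Fin P))) (hUopen : IsOpen U)
    (f : Fin P → EuclideanSpace ℝ (Fin N ⊕ Fin P) → ℝ) (hf : ∀ i, CRM M U (f i))
    (c : EuclideanSpace ℝ (Fin N ⊕ Fin P)) (hc : c ∈ U)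
    (hzero : ∀ i, f i c = 0)
    (hjac : IsUnit (Matrix.of (fun i j => pd (Sum.inr j) (f i) c) : Matrix (Fin P) (Fin P) ℝ)) :
    ∃ V : Set (EuclideanSpace ℝ (Fin N)), ∃ W : Set (EuclideanSpace ℝ (Fin P)),
      IsOpen V ∧ IsOpen W ∧ fstE c ∈ V ∧ sndE c ∈ W ∧
      (∀ x ∈ V, ∀ y ∈ W, pairE x y ∈ U) ∧
      ∃ g : Fin P → EuclideanSpace ℝ (Fin N) → ℝ,
        (∀ i, CRM M V (g i)) ∧
        (∀ i, g i (fstE c) = sndE c i) ∧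
        (∀ x ∈ V, ((EuclideanSpace.equiv (Fin P) ℝ).symm (fun j => g j x)) ∈ W) ∧
        (∀ x ∈ V, ∀ i,
          f i (pairE x ((EuclideanSpace.equiv (Fin P) ℝ).symm (fun j => g j x))) = 0) :=
  stmt8_general M hpos hlog U hUopen f hf c hc hzero hjac
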